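/- arXiv:2012.02239 — 2 statements merged into one kernel-verified Lean document; each statement's English description precedes it below -/
import Mathlib

section
/- The relation ⊴_rat on sig-poly-pairs, defined by (u,p) ⊴_rat (v,q) :⇔ lp(q)⊗u ≺_t lp(p)⊗v or (lp(q)⊗u = lp(p)⊗v and u ⪯_t v), with the convention lp(0) = 1, is a rewrite order. -/
namespace SigGB

noncomputable section

/-- Power-products in `n` indeterminates, written additively as exponent vectors
(so the power-product `1` is `0`, and multiplication of power-products is `+`). -/
abbrev PP (n : ℕ) : Type := Fin n →₀ ℕ

/-- Terms: a power-product together with a component index (`t·e_i ↝ (t, i)`). -/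
abbrev Term (n m : ℕ) : Type := PP n × Fin m

/-- Multiplication of a term by a power-product: `t ⊗ (s·e_i) = (t·s)·e_i`. -/
def mulTerm {n m : ℕ} (t : PP n) (u : Term n m) : Term n m := (t + u.1, u.2)

/-- Divisibility of terms: `u ∣ v` iff `v = t ⊗ u` for some power-product `t`. -/
def termDvd {n m : ℕ} (u v : Term n m) : Prop := ∃ t : PP n, v = mulTerm t u

/-- Componentwise lcm of power-products. -/
noncomputable def lcmPP {n : ℕ} (s t : PP n) : PP n := Finsupp.zipWith max (max_self 0) s t

/-- Strict part of a relation. -/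
def strict {α : Type*} (r : α → α → Prop) (x y : α) : Prop := r x y ∧ x ≠ y

/-- `ple` is an admissible order on power-products and `tle` is a compatible
linear order on terms. -/
structure OrdersOK {n m : ℕ} (ple : PP n → PP n → Prop)
    (tle : Term n m → Term n m → Prop) : Prop where
  ple_refl : ∀ t, ple t t
  ple_trans : ∀ s t u, ple s t → ple t u → ple s u
  ple_antisymm : ∀ s t, ple s t → ple t s → s = t
  ple_total : ∀ s t, ple s t ∨ ple t s
  ple_one_le : ∀ t, ple 0 t
  ple_mul : ∀ (t s₁ s₂ : PP n), ple s₁ s₂ → ple (t + s₁) (t + s₂)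
  tle_refl : ∀ u, tle u u
  tle_trans : ∀ u v w, tle u v → tle v w → tle u w
  tle_antisymm : ∀ u v, tle u v → tle v u → u = v
  tle_total : ∀ u v, tle u v ∨ tle v u
  tle_mul : ∀ (t : PP n) (u v : Term n m), tle u v → tle (mulTerm t u) (mulTerm t v)
  tle_compat : ∀ (s t : PP n) (i j : Fin m), ple s t → i ≤ j → tle (s, i) (t, j)

variable {K : Type*} [Field K] {n m : ℕ} [NeZero m]

variable (f : Fin m → MvPolynomial (Fin n) K)
variable (ple : PP n → PP n → Prop)
variable (tle : Term n m → Term n m → Prop)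

/-- The module homomorphism `R^m → R` determined by `e_i ↦ f i`, i.e. `a ↦ ‾a`. -/
def bar (a : Fin m → MvPolynomial (Fin n) K) : MvPolynomial (Fin n) K := ∑ i, a i * f i

/-- Multiplication of a module element by a coefficient `c` and a power-product `t`. -/
noncomputable def monomMul (c : K) (t : PP n) (a : Fin m → MvPolynomial (Fin n) K) :
    Fin m → MvPolynomial (Fin n) K :=
  fun i => MvPolynomial.monomial t c * a i

/-- The coefficient of a term in a module element. -/
def coeffM (a : Fin m → MvPolynomial (Fin n) K) (u : Term n m) : K :=
  MvPolynomial.coeff u.1 (a u.2)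

open Classical in
/-- Leading power-product of a polynomial w.r.t. `ple`
(junk value `0`, i.e. the power-product `1`, for the zero polynomial). -/
noncomputable def lp (p : MvPolynomial (Fin n) K) : PP n :=
  if h : ∃ t, MvPolynomial.coeff t p ≠ 0 ∧ ∀ s, MvPolynomial.coeff s p ≠ 0 → ple s t
  then h.choose else 0

/-- Leading coefficient of a polynomial w.r.t. `ple`. -/
noncomputable def lc (p : MvPolynomial (Fin n) K) : K := MvPolynomial.coeff (lp ple p) p

open Classical in
/-- Signature of a module element: its `tle`-largest term with nonzero coefficient
(junk value for `0`). -/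
noncomputable def sig (a : Fin m → MvPolynomial (Fin n) K) : Term n m :=
  if h : ∃ u, coeffM a u ≠ 0 ∧ ∀ v, coeffM a v ≠ 0 → tle v u
  then h.choose else ((0 : PP n), (0 : Fin m))

/-- Leading coefficient of a module element. -/
noncomputable def lcM (a : Fin m → MvPolynomial (Fin n) K) : K := coeffM a (sig tle a)

/-- One-step s-reduction of `a` to `b` modulo `G`, witnessed by `g ∈ G` and the
power-product `t`. -/
def RedStepWith (G : Set (Fin m → MvPolynomial (Fin n) K))
    (a b g : Fin m → MvPolynomial (Fin n) K) (t : PP n) : Prop :=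
  g ∈ G ∧ bar f g ≠ 0 ∧
    MvPolynomial.coeff (t + lp ple (bar f g)) (bar f a) ≠ 0 ∧
    b = a - monomMul (MvPolynomial.coeff (t + lp ple (bar f g)) (bar f a) / lc ple (bar f g)) t g ∧
    tle (mulTerm t (sig tle g)) (sig tle a)

/-- The step witnessed by `g` and `t` is regular: `t ⊗ 𝔰(g) ≺_t 𝔰(a)`. -/
def RegularWith (a g : Fin m → MvPolynomial (Fin n) K) (t : PP n) : Prop :=
  strict tle (mulTerm t (sig tle g)) (sig tle a)

/-- The step witnessed by `g` and `t` is top: `t·lp(‾g) = lp(‾a)`. -/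
def TopWith (a g : Fin m → MvPolynomial (Fin n) K) (t : PP n) : Prop :=
  t + lp ple (bar f g) = lp ple (bar f a)

/-- `a` s-reduces to `b` modulo `G` in one step. -/
def SigRedStep (G : Set (Fin m → MvPolynomial (Fin n) K))
    (a b : Fin m → MvPolynomial (Fin n) K) : Prop :=
  ∃ g t, RedStepWith f ple tle G a b g t

/-- `a` regular s-reduces to `b` modulo `G` in one step. -/
def RegRedStep (G : Set (Fin m → MvPolynomial (Fin n) K))
    (a b : Fin m → MvPolynomial (Fin n) K) : Prop :=
  ∃ g t, RedStepWith f ple tle G a b g t ∧ RegularWith tle a g t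

/-- `a` regular top s-reduces to `b` modulo `G` in one step. -/
def RegTopRedStep (G : Set (Fin m → MvPolynomial (Fin n) K))
    (a b : Fin m → MvPolynomial (Fin n) K) : Prop :=
  ∃ g t, RedStepWith f ple tle G a b g t ∧ RegularWith tle a g t ∧ TopWith f ple a g t

/-- `a` is regular s-irreducible modulo `G`. -/
def RegIrred (G : Set (Fin m → MvPolynomial (Fin n) K))
    (a : Fin m → MvPolynomial (Fin n) K) : Prop :=
  ∀ b, ¬ RegRedStep f ple tle G a b

/-- `a` is regular top s-irreducible modulo `G`. -/
def RegTopIrred (G : Set (Fin m → MvPolynomial (Fin n) K))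
    (a : Fin m → MvPolynomial (Fin n) K) : Prop :=
  ∀ b, ¬ RegTopRedStep f ple tle G a b

/-- `a` s-reduces to zero modulo `G`. -/
def SigRedZero (G : Set (Fin m → MvPolynomial (Fin n) K))
    (a : Fin m → MvPolynomial (Fin n) K) : Prop :=
  ∃ b, Relation.ReflTransGen (SigRedStep f ple tle G) a b ∧ bar f b = 0

/-- `a` regular s-reduces to zero modulo `G`. -/
def RegRedZero (G : Set (Fin m → MvPolynomial (Fin n) K))
    (a : Fin m → MvPolynomial (Fin n) K) : Prop :=
  ∃ b, Relation.ReflTransGen (RegRedStep f ple tle G) a b ∧ bar f b = 0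

/-- `G` is a signature Gröbner basis in the term `u`. -/
def IsSigGBIn (G : Set (Fin m → MvPolynomial (Fin n) K)) (u : Term n m) : Prop :=
  ∀ a : Fin m → MvPolynomial (Fin n) K, a ≠ 0 → sig tle a = u → SigRedZero f ple tle G a

/-- `G` is a signature Gröbner basis up to the term `u`. -/
def IsSigGBUpto (G : Set (Fin m → MvPolynomial (Fin n) K)) (u : Term n m) : Prop :=
  ∀ v, strict tle v u → IsSigGBIn f ple tle G v

/-- `u` is a syzygy signature. -/
def IsSyzSig (u : Term n m) : Prop :=
  ∃ a : Fin m → MvPolynomial (Fin n) K, a ≠ 0 ∧ sig tle a = u ∧ bar f a = 0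

/-- The sig-poly-pair `(𝔰(a), ‾a)` of a module element `a`. -/
noncomputable def sppOf (a : Fin m → MvPolynomial (Fin n) K) :
    Term n m × MvPolynomial (Fin n) K :=
  (sig tle a, bar f a)

/-- `x` is a sig-poly-pair. -/
def IsSPP (x : Term n m × MvPolynomial (Fin n) K) : Prop :=
  ∃ a : Fin m → MvPolynomial (Fin n) K, a ≠ 0 ∧ sppOf f tle a = x

/-- `ro` is a rewrite order. -/
def IsRewriteOrder
    (ro : Term n m × MvPolynomial (Fin n) K → Term n m × MvPolynomial (Fin n) K → Prop) :
    Prop :=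
  (∀ x, IsSPP f tle x → ro x x) ∧
  (∀ x y z, IsSPP f tle x → IsSPP f tle y → IsSPP f tle z → ro x y → ro y z → ro x z) ∧
  (∀ x y, IsSPP f tle x → IsSPP f tle y → (ro x y ∨ ro y x)) ∧
  (∀ x y, IsSPP f tle x → IsSPP f tle y → ro x y → ro y x → x.1 = y.1) ∧
  (∀ (G : Set (Fin m → MvPolynomial (Fin n) K)) (a b : Fin m → MvPolynomial (Fin n) K),
    IsSigGBUpto f ple tle G (sig tle b) → a ∈ G → b ∈ G → a ≠ 0 → b ≠ 0 →
    termDvd (sig tle a) (sig tle b) → RegTopIrred f ple tle G b →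
    ro (sppOf f tle a) (sppOf f tle b))

/-- `a` is a canonical rewriter in the term `u` w.r.t. `G` (for the rewrite order `ro`). -/
def IsCanonRewriter
    (ro : Term n m × MvPolynomial (Fin n) K → Term n m × MvPolynomial (Fin n) K → Prop)
    (G : Set (Fin m → MvPolynomial (Fin n) K)) (u : Term n m)
    (a : Fin m → MvPolynomial (Fin n) K) : Prop :=
  a ∈ G ∧ a ≠ 0 ∧ termDvd (sig tle a) u ∧
    ∀ g ∈ G, g ≠ 0 → termDvd (sig tle g) u → ro (sppOf f tle g) (sppOf f tle a)

/-- `G` is a rewrite basis in the term `u` (for the rewrite order `ro`). -/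
def IsRBIn
    (ro : Term n m × MvPolynomial (Fin n) K → Term n m × MvPolynomial (Fin n) K → Prop)
    (G : Set (Fin m → MvPolynomial (Fin n) K)) (u : Term n m) : Prop :=
  IsSyzSig f tle u ∨
    ∃ g, IsCanonRewriter f tle ro G u g ∧
      RegTopIrred f ple tle G (monomMul (1 : K) (u.1 - (sig tle g).1) g)

/-- `G` is a rewrite basis up to the term `u` (for the rewrite order `ro`). -/
def IsRBUpto
    (ro : Term n m × MvPolynomial (Fin n) K → Term n m × MvPolynomial (Fin n) K → Prop)
    (G : Set (Fin m → MvPolynomial (Fin n) K)) (u : Term n m) : Prop :=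
  ∀ v, strict tle v u → IsRBIn f ple tle ro G v

/-- The S-pair of two module elements. -/
noncomputable def spair (a b : Fin m → MvPolynomial (Fin n) K) :
    Fin m → MvPolynomial (Fin n) K :=
  monomMul ((1 : K) / lc ple (bar f a))
      (lcmPP (lp ple (bar f a)) (lp ple (bar f b)) - lp ple (bar f a)) a -
    monomMul ((1 : K) / lc ple (bar f b))
      (lcmPP (lp ple (bar f a)) (lp ple (bar f b)) - lp ple (bar f b)) b

/-- `a` and `b` give rise to a regular S-pair. -/
def IsRegularSPair (a b : Fin m → MvPolynomial (Fin n) K) : Prop :=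
  bar f a ≠ 0 ∧ bar f b ≠ 0 ∧
    mulTerm (lcmPP (lp ple (bar f a)) (lp ple (bar f b)) - lp ple (bar f a)) (sig tle a) ≠
      mulTerm (lcmPP (lp ple (bar f a)) (lp ple (bar f b)) - lp ple (bar f b)) (sig tle b)

/-- `B` is a Gröbner basis of the ideal `I` w.r.t. `ple`. -/
def IsGroebnerBasis (B : Set (MvPolynomial (Fin n) K)) (I : Ideal (MvPolynomial (Fin n) K)) :
    Prop :=
  (∀ b ∈ B, b ∈ I) ∧ Ideal.span B = I ∧
    ∀ p ∈ I, p ≠ 0 → ∃ b ∈ B, b ≠ 0 ∧ ∃ t : PP n, lp ple p = t + lp ple b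

/-- One step of ordinary polynomial reduction of `p` to `q` modulo `B`. -/
def PolyRedStep (B : Set (MvPolynomial (Fin n) K)) (p q : MvPolynomial (Fin n) K) : Prop :=
  ∃ r ∈ B, r ≠ 0 ∧ ∃ t : PP n, MvPolynomial.coeff (t + lp ple r) p ≠ 0 ∧
    q = p - MvPolynomial.monomial t (MvPolynomial.coeff (t + lp ple r) p / lc ple r) * r

section RewriteOrder

open MvPolynomial

variable {f ple tle}

theorem exists_greatest_of_finite {α : Type*} {r : α → α → Prop} (hrefl : ∀ x, r x x)
    (htrans : ∀ x y z, r x y → r y z → r x z) (htotal : ∀ x y, r x y ∨ r y x)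
    {s : Set α} (hs : s.Finite) (hne : s.Nonempty) : ∃ x ∈ s, ∀ y ∈ s, r y x := by
  induction s, hs using Set.Finite.induction_on with
  | empty => exact absurd hne Set.not_nonempty_empty
  | @insert a s _ _ ih =>
    rcases s.eq_empty_or_nonempty with rfl | hs
    · exact ⟨a, by simp, by simpa using hrefl a⟩
    · obtain ⟨x, hx, hmax⟩ := ih hs
      rcases htotal a x with h | h
      · exact ⟨x, Or.inr hx, by rintro y (rfl | hy); exacts [h, hmax y hy]⟩
      · refine ⟨a, Or.inl rfl, ?_⟩
        rintro y (rfl | hy)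
        exacts [hrefl _, htrans _ _ _ (hmax y hy) h]

theorem strict_of_not {α : Type*} {r : α → α → Prop} (htotal : ∀ x y, r x y ∨ r y x)
    {x y : α} (h : ¬ r x y) : strict r y x :=
  ⟨(htotal y x).resolve_right h, by rintro rfl; exact h ((htotal y y).elim id id)⟩

theorem mulTerm_mulTerm (s t : PP n) (u : Term n m) :
    mulTerm s (mulTerm t u) = mulTerm (s + t) u := by
  simp [mulTerm, add_assoc]

theorem mulTerm_left_comm (s t : PP n) (u : Term n m) :
    mulTerm s (mulTerm t u) = mulTerm t (mulTerm s u) := by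
  rw [mulTerm_mulTerm, mulTerm_mulTerm, add_comm]

theorem mulTerm_injective (t : PP n) : Function.Injective (mulTerm (m := m) t) := by
  rintro ⟨a, i⟩ ⟨b, j⟩ h
  simpa [mulTerm] using h

theorem OrdersOK.tle_mul_iff (hord : OrdersOK ple tle) (t : PP n) (u v : Term n m) :
    tle (mulTerm t u) (mulTerm t v) ↔ tle u v := by
  refine ⟨fun h => (hord.tle_total u v).elim id fun h' => ?_, hord.tle_mul t u v⟩
  rw [mulTerm_injective t (hord.tle_antisymm _ _ h (hord.tle_mul t v u h'))]
  exact hord.tle_refl v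

theorem OrdersOK.tle_mulTerm_of_ple (hord : OrdersOK ple tle) {s t : PP n} (h : ple s t)
    (u : Term n m) : tle (mulTerm s u) (mulTerm t u) := by
  refine hord.tle_compat _ _ _ _ ?_ le_rfl
  rw [add_comm s, add_comm t]
  exact hord.ple_mul _ _ _ h

theorem OrdersOK.tle_mulTerm_self (hord : OrdersOK ple tle) (t : PP n) (u : Term n m) :
    tle u (mulTerm t u) := by
  simpa [mulTerm] using hord.tle_mulTerm_of_ple (hord.ple_one_le t) u

theorem lp_zero : lp ple (0 : MvPolynomial (Fin n) K) = 0 := by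
  simp [lp]

theorem lp_spec (hord : OrdersOK ple tle) {p : MvPolynomial (Fin n) K} (hp : p ≠ 0) :
    coeff (lp ple p) p ≠ 0 ∧ ∀ s, coeff s p ≠ 0 → ple s (lp ple p) := by
  have h : ∃ t, coeff t p ≠ 0 ∧ ∀ s, coeff s p ≠ 0 → ple s t :=
    exists_greatest_of_finite (s := {t | coeff t p ≠ 0}) hord.ple_refl hord.ple_trans
      hord.ple_total (p.support.finite_toSet.subset fun t ht => by simpa using ht)
      (ne_zero_iff.mp hp)
  rw [lp, dif_pos h]
  exact h.choose_spec

theorem lp_eq (hord : OrdersOK ple tle) {p : MvPolynomial (Fin n) K} {t : PP n}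
    (ht : coeff t p ≠ 0) (hmax : ∀ s, coeff s p ≠ 0 → ple s t) : lp ple p = t := by
  have h := lp_spec hord (ne_zero_iff.mpr ⟨t, ht⟩)
  exact hord.ple_antisymm _ _ (hmax _ h.1) (h.2 _ ht)

theorem coeffM_sub (a b : Fin m → MvPolynomial (Fin n) K) (u : Term n m) :
    coeffM (a - b) u = coeffM a u - coeffM b u := by
  simp [coeffM]

theorem sig_spec (hord : OrdersOK ple tle) {a : Fin m → MvPolynomial (Fin n) K} (ha : a ≠ 0) :
    coeffM a (sig tle a) ≠ 0 ∧ ∀ v, coeffM a v ≠ 0 → tle v (sig tle a) := by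
  have hfin : {u | coeffM a u ≠ 0}.Finite := by
    refine (Set.finite_iUnion fun i : Fin m =>
      ((a i).support.finite_toSet.image fun t => ((t, i) : Term n m))).subset ?_
    rintro ⟨t, i⟩ h
    exact Set.mem_iUnion.mpr ⟨i, t, by simpa [coeffM] using h, rfl⟩
  have hne : {u | coeffM a u ≠ 0}.Nonempty := by
    obtain ⟨i, hi⟩ := Function.ne_iff.mp ha
    obtain ⟨t, ht⟩ := ne_zero_iff.mp hi
    exact ⟨(t, i), ht⟩
  have h : ∃ u, coeffM a u ≠ 0 ∧ ∀ v, coeffM a v ≠ 0 → tle v u :=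
    exists_greatest_of_finite hord.tle_refl hord.tle_trans hord.tle_total hfin hne
  rw [sig, dif_pos h]
  exact h.choose_spec

theorem coeffM_monomMul_mulTerm (c : K) (t : PP n) (a : Fin m → MvPolynomial (Fin n) K)
    (u : Term n m) : coeffM (monomMul c t a) (mulTerm t u) = c * coeffM a u := by
  simp [coeffM, monomMul, mulTerm]

theorem tle_of_coeffM_monomMul_ne_zero (hord : OrdersOK ple tle) {c : K} {t : PP n}
    {a : Fin m → MvPolynomial (Fin n) K} {v : Term n m} (hv : coeffM (monomMul c t a) v ≠ 0) :
    tle v (mulTerm t (sig tle a)) := by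
  simp only [coeffM, monomMul, coeff_monomial_mul', ne_eq, ite_eq_right_iff, Classical.not_imp,
    mul_eq_zero, not_or] at hv
  have ha : a ≠ 0 := by
    rintro rfl
    simp at hv
  have h := hord.tle_mul t _ _ ((sig_spec hord ha).2 (v.1 - t, v.2) hv.2.2)
  simpa [mulTerm, add_tsub_cancel_of_le hv.1] using h

theorem ple_of_coeff_monomial_mul_ne_zero (hord : OrdersOK ple tle) {c : K} {t s : PP n}
    {p : MvPolynomial (Fin n) K} (hs : coeff s (monomial t c * p) ≠ 0) :
    ple s (t + lp ple p) := by
  simp only [coeff_monomial_mul', ne_eq, ite_eq_right_iff, Classical.not_imp,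
    mul_eq_zero, not_or] at hs
  have h := hord.ple_mul t _ _ ((lp_spec hord (ne_zero_iff.mpr ⟨_, hs.2.2⟩)).2 _ hs.2.2)
  rwa [add_tsub_cancel_of_le hs.1] at h

theorem bar_sub_monomMul (c : K) (t : PP n) (a g : Fin m → MvPolynomial (Fin n) K) :
    bar f (a - monomMul c t g) = bar f a - monomial t c * bar f g := by
  simp [bar, monomMul, sub_mul, Finset.mul_sum, mul_assoc]

theorem ne_zero_of_bar_ne_zero {a : Fin m → MvPolynomial (Fin n) K} (ha : bar f a ≠ 0) :
    a ≠ 0 := by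
  rintro rfl
  simp [bar] at ha

/-- Subtracting a polynomial all of whose power-products are smaller than `lp p` does not affect
the leading power-product of `p`. -/
theorem lp_sub_eq (hord : OrdersOK ple tle) {p q : MvPolynomial (Fin n) K} (hp : p ≠ 0)
    (hq : ∀ s, coeff s q ≠ 0 → strict ple s (lp ple p)) :
    p - q ≠ 0 ∧ lp ple (p - q) = lp ple p := by
  obtain ⟨hlc, hmax⟩ := lp_spec hord hp
  have hq0 : coeff (lp ple p) q = 0 := by
    by_contra h
    exact (hq _ h).2 rfl
  have hc : coeff (lp ple p) (p - q) ≠ 0 := by rwa [coeff_sub, hq0, sub_zero]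
  refine ⟨ne_zero_iff.mpr ⟨_, hc⟩, lp_eq hord hc fun s hs => ?_⟩
  by_cases h : coeff s p = 0
  · refine (hq s fun h' => hs ?_).1
    rw [coeff_sub, h, h', sub_zero]
  · exact hmax s h

theorem tle_sig_sub (hord : OrdersOK ple tle) {a b : Fin m → MvPolynomial (Fin n) K}
    (hab : a - b ≠ 0) {u : Term n m} (ha : ∀ v, coeffM a v ≠ 0 → tle v u)
    (hb : ∀ v, coeffM b v ≠ 0 → tle v u) : tle (sig tle (a - b)) u := by
  have h := (sig_spec hord hab).1
  by_cases h' : coeffM a (sig tle (a - b)) = 0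
  · refine hb _ fun h'' => h ?_
    rw [coeffM_sub, h', h'', sub_zero]
  · exact ha _ h'

/-- An element with nonzero image that s-reduces to zero is top s-reducible. -/
theorem exists_top_reducer (hord : OrdersOK ple tle) {G : Set (Fin m → MvPolynomial (Fin n) K)}
    {d : Fin m → MvPolynomial (Fin n) K} (h : SigRedZero f ple tle G d) (hd : bar f d ≠ 0) :
    ∃ g ∈ G, ∃ t, bar f g ≠ 0 ∧ t + lp ple (bar f g) = lp ple (bar f d) ∧
      tle (mulTerm t (sig tle g)) (sig tle d) := by
  obtain ⟨e, hde, he⟩ := h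
  induction hde using Relation.ReflTransGen.head_induction_on with
  | refl => exact absurd he hd
  | @head d d' hstep _ ih =>
    obtain ⟨g, t, hgG, hg, hcoeff, rfl, hsig⟩ := hstep
    by_cases htop : t + lp ple (bar f g) = lp ple (bar f d)
    · exact ⟨g, hgG, t, hg, htop, hsig⟩
    · have hlt := (lp_spec hord hd).2 _ hcoeff
      rw [bar_sub_monomMul] at ih
      obtain ⟨hne, hlp⟩ := lp_sub_eq hord hd
        (q := monomial t (coeff (t + lp ple (bar f g)) (bar f d) / lc ple (bar f g)) * bar f g)
        fun s hs => by
          have hs' := ple_of_coeff_monomial_mul_ne_zero hord hs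
          refine ⟨hord.ple_trans _ _ _ hs' hlt, ?_⟩
          rintro rfl
          exact htop (hord.ple_antisymm _ _ hlt hs')
      obtain ⟨g', hg'G, t', hg', htop', hsig'⟩ := ih hne
      refine ⟨g', hg'G, t', hg', htop'.trans hlp, hord.tle_trans _ _ _ hsig' ?_⟩
      refine tle_sig_sub hord (ne_zero_of_bar_ne_zero (f := f) ?_)
        (sig_spec hord (ne_zero_of_bar_ne_zero hd)).2 fun v hv =>
          hord.tle_trans _ _ _ (tle_of_coeffM_monomMul_ne_zero hord hv) hsig
      rwa [bar_sub_monomMul]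

/-- Among all multiples with the same signature, a regular top s-irreducible element has the
smallest leading power-product. -/
theorem ple_lp_of_regTopIrred (hord : OrdersOK ple tle)
    {G : Set (Fin m → MvPolynomial (Fin n) K)} {a b : Fin m → MvPolynomial (Fin n) K}
    (hG : IsSigGBUpto f ple tle G (sig tle b)) (ha : a ≠ 0) {t : PP n}
    (ht : sig tle b = mulTerm t (sig tle a)) (hirr : RegTopIrred f ple tle G b) :
    ple (lp ple (bar f b)) (t + lp ple (bar f a)) := by
  by_contra hlt
  replace hlt := strict_of_not hord.ple_total hlt
  have hb : bar f b ≠ 0 := by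
    intro h
    rw [h, lp_zero] at hlt
    exact hlt.2 (hord.ple_antisymm _ _ hlt.1 (hord.ple_one_le _))
  have hb0 := ne_zero_of_bar_ne_zero hb
  set c := coeffM b (sig tle b) / coeffM a (sig tle a) with hc
  set d := b - monomMul c t a with hd
  have hbar : bar f d ≠ 0 ∧ lp ple (bar f d) = lp ple (bar f b) := by
    rw [hd, bar_sub_monomMul]
    refine lp_sub_eq hord hb fun s hs => ?_
    have hs' := ple_of_coeff_monomial_mul_ne_zero hord hs
    refine ⟨hord.ple_trans _ _ _ hs' hlt.1, ?_⟩
    rintro rfl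
    exact hlt.2 (hord.ple_antisymm _ _ hlt.1 hs')
  have hd0 := ne_zero_of_bar_ne_zero hbar.1
  have hsig : strict tle (sig tle d) (sig tle b) := by
    refine ⟨tle_sig_sub hord hd0 (sig_spec hord hb0).2 fun v hv => ?_, fun h => ?_⟩
    · rw [ht]
      exact tle_of_coeffM_monomMul_ne_zero hord hv
    · refine (sig_spec hord hd0).1 ?_
      have hcancel : coeffM (monomMul c t a) (sig tle b) = coeffM b (sig tle b) := by
        conv_lhs => rw [ht, coeffM_monomMul_mulTerm, hc]
        exact div_mul_cancel₀ _ (sig_spec hord ha).1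
      rw [h, hd, coeffM_sub, hcancel, sub_self]
  obtain ⟨g, hgG, s, hg, htop, hs⟩ := exists_top_reducer hord (hG _ hsig d hd0 rfl) hbar.1
  rw [hbar.2] at htop
  have hreg : strict tle (mulTerm s (sig tle g)) (sig tle b) := by
    refine ⟨hord.tle_trans _ _ _ hs hsig.1, fun h => ?_⟩
    rw [h] at hs
    exact hsig.2 (hord.tle_antisymm _ _ hsig.1 hs)
  refine hirr _ ⟨g, s, ⟨hgG, hg, ?_, rfl, hreg.1⟩, hreg, htop⟩
  rw [htop]
  exact (lp_spec hord hb).1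

end RewriteOrder

/-- the relation `⊴_rat` is a rewrite order. -/
theorem rw_rat_is_rewrite_order (hord : OrdersOK ple tle) :
    IsRewriteOrder f ple tle (fun x y =>
      strict tle (mulTerm (lp ple y.2) x.1) (mulTerm (lp ple x.2) y.1) ∨
        (mulTerm (lp ple y.2) x.1 = mulTerm (lp ple x.2) y.1 ∧ tle x.1 y.1)) := by
  refine ⟨fun x _ => Or.inr ⟨rfl, hord.tle_refl _⟩, ?_, ?_, ?_, ?_⟩
  · rintro ⟨u, p⟩ ⟨v, q⟩ ⟨w, r⟩ - - - hxy hyz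
    dsimp only at hxy hyz ⊢
    have hxy_le : tle (mulTerm (lp ple q) u) (mulTerm (lp ple p) v) :=
      hxy.elim (fun h => h.1) fun h => h.1 ▸ hord.tle_refl _
    have hyz_le : tle (mulTerm (lp ple r) v) (mulTerm (lp ple q) w) :=
      hyz.elim (fun h => h.1) fun h => h.1 ▸ hord.tle_refl _
    have hleft := hord.tle_mul (lp ple r) _ _ hxy_le
    have hright := hord.tle_mul (lp ple p) _ _ hyz_le
    have hmid : mulTerm (lp ple r) (mulTerm (lp ple p) v) =
        mulTerm (lp ple p) (mulTerm (lp ple r) v) := mulTerm_left_comm _ _ _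
    have hle : tle (mulTerm (lp ple r) u) (mulTerm (lp ple p) w) := by
      rw [← hord.tle_mul_iff (lp ple q), mulTerm_left_comm _ _ u, mulTerm_left_comm _ _ w]
      exact hord.tle_trans _ _ _ hleft (hmid ▸ hright)
    by_cases heq : mulTerm (lp ple r) u = mulTerm (lp ple p) w
    · have hends : mulTerm (lp ple r) (mulTerm (lp ple q) u) =
          mulTerm (lp ple p) (mulTerm (lp ple q) w) := by
        rw [mulTerm_left_comm, heq, mulTerm_left_comm]
      have hxy_eq : mulTerm (lp ple q) u = mulTerm (lp ple p) v :=
        mulTerm_injective _ (hord.tle_antisymm _ _ hleft (hends ▸ hmid ▸ hright))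
      have hyz_eq : mulTerm (lp ple r) v = mulTerm (lp ple q) w := by
        apply mulTerm_injective (lp ple p)
        rw [← hmid, ← hends, hxy_eq]
      exact Or.inr ⟨heq, hord.tle_trans _ _ _ (hxy.resolve_left fun h => h.2 hxy_eq).2
        (hyz.resolve_left fun h => h.2 hyz_eq).2⟩
    · exact Or.inl ⟨hle, heq⟩
  · rintro ⟨u, p⟩ ⟨v, q⟩ - -
    dsimp only
    by_cases heq : mulTerm (lp ple q) u = mulTerm (lp ple p) v
    · exact (hord.tle_total u v).imp (fun h => Or.inr ⟨heq, h⟩) fun h => Or.inr ⟨heq.symm, h⟩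
    · exact (hord.tle_total _ _).imp (fun h => Or.inl ⟨h, heq⟩)
        fun h => Or.inl ⟨h, Ne.symm heq⟩
  · rintro ⟨u, p⟩ ⟨v, q⟩ - - (h₁ | h₁) (h₂ | h₂)
    · exact absurd (hord.tle_antisymm _ _ h₁.1 h₂.1) h₁.2
    · exact absurd h₂.1.symm h₁.2
    · exact absurd h₁.1.symm h₂.2
    · exact hord.tle_antisymm _ _ h₁.2 h₂.2
  · rintro G a b hG - - ha - ⟨t, ht⟩ hirr
    have hle : tle (mulTerm (lp ple (bar f b)) (sig tle a))
        (mulTerm (lp ple (bar f a)) (sig tle b)) := by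
      rw [ht, mulTerm_mulTerm, add_comm]
      exact hord.tle_mulTerm_of_ple (ple_lp_of_regTopIrred hord hG ha ht hirr) _
    by_cases heq : mulTerm (lp ple (bar f b)) (sig tle a) =
        mulTerm (lp ple (bar f a)) (sig tle b)
    · refine Or.inr ⟨heq, ?_⟩
      change tle (sig tle a) (sig tle b)
      rw [ht]
      exact hord.tle_mulTerm_self t _
    · exact Or.inl ⟨hle, heq⟩

end

end SigGB
end

section
/- If (f_1,…,f_m) is a regular sequence in R, then every syzygy of (f_1,…,f_m) — i.e., every a = (a_1,…,a_m) ∈ R^m with a_1·f_1 + … + a_m·f_m = 0 — lies in the R-submodule of R^m generated by the Koszul syzygies f_j·e_i − f_i·e_j for 1 ≤ i < j ≤ m. -/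
namespace SigGB

noncomputable section

variable {K : Type*} [Field K] {n m : ℕ} [NeZero m]

variable (f : Fin m → MvPolynomial (Fin n) K)
variable (ple : PP n → PP n → Prop)
variable (tle : Term n m → Term n m → Prop)

/-- The submodule of `R^ι` generated by the Koszul syzygies `g_j·e_i − g_i·e_j` (`i < j`). -/
def koszulSyzygies {R ι : Type*} [CommRing R] [LinearOrder ι] (g : ι → R) :
    Submodule R (ι → R) :=
  Submodule.span R {x : ι → R | ∃ i j : ι, i < j ∧
    x = g j • (Pi.single i 1 : ι → R) - g i • (Pi.single j 1 : ι → R)}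

theorem sum_mul_eq_zero_of_mem_koszulSyzygies {R ι : Type*} [CommRing R] [LinearOrder ι]
    [Fintype ι] {g x : ι → R} (hx : x ∈ koszulSyzygies g) : ∑ i, x i * g i = 0 := by
  induction hx using Submodule.span_induction with
  | mem x hx =>
    obtain ⟨i, j, -, rfl⟩ := hx
    simp [sub_mul, Finset.sum_sub_distrib, Pi.single_apply, mul_comm (g j)]
  | zero => simp
  | add x y _ _ hx hy => simp [add_mul, Finset.sum_add_distrib, hx, hy]
  | smul c x _ hx => simp [mul_assoc, ← Finset.mul_sum, hx]

/-- Every element of the ideal generated by the `g i` with `i < j` is the last coordinate of an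
element of the Koszul submodule supported on indices `≤ j`. -/
theorem exists_koszulSyzygies_apply_eq {R ι : Type*} [CommRing R] [LinearOrder ι]
    {g : ι → R} {j : ι} {q : R} (hq : q ∈ Ideal.span (g '' {i | i < j})) :
    ∃ x ∈ koszulSyzygies g, x j = q ∧ ∀ i, j < i → x i = 0 := by
  induction hq using Submodule.span_induction with
  | mem q hq =>
    obtain ⟨i, hi, rfl⟩ := hq
    have hij : i < j := hi
    refine ⟨_, neg_mem (Submodule.subset_span ⟨i, j, hij, rfl⟩), ?_, fun l hl => ?_⟩
    · simp [hij.ne']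
    · simp [hl.ne', (hij.trans hl).ne']
  | zero => exact ⟨0, zero_mem _, rfl, fun _ _ => rfl⟩
  | add p q _ _ hp hq =>
    obtain ⟨x, hx, rfl, hx0⟩ := hp
    obtain ⟨y, hy, rfl, hy0⟩ := hq
    exact ⟨x + y, add_mem hx hy, rfl, fun i hi => by simp [hx0 i hi, hy0 i hi]⟩
  | smul c q _ hq =>
    obtain ⟨x, hx, rfl, hx0⟩ := hq
    exact ⟨c • x, Submodule.smul_mem _ c hx, rfl, fun i hi => by simp [hx0 i hi]⟩

/-- A syzygy of a regular sequence supported on the first `k` indices lies in the Koszul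
submodule. -/
theorem mem_koszulSyzygies_of_support_lt {R : Type*} [CommRing R] {r : ℕ} {g : Fin r → R}
    (hreg : ∀ j : Fin r, ∀ q : R,
      q * g j ∈ Ideal.span (g '' {i | i < j}) → q ∈ Ideal.span (g '' {i | i < j}))
    (k : ℕ) (a : Fin r → R) (hsupp : ∀ i : Fin r, k ≤ i → a i = 0)
    (ha : ∑ i, a i * g i = 0) : a ∈ koszulSyzygies g := by
  induction k generalizing a with
  | zero =>
    rw [show a = 0 from funext fun i => hsupp i (Nat.zero_le _)]
    exact zero_mem _
  | succ k ih =>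
    by_cases hk : k < r
    · let j : Fin r := ⟨k, hk⟩
      have hlast : a j * g j ∈ Ideal.span (g '' {i | i < j}) := by
        rw [← Finset.add_sum_erase _ _ (Finset.mem_univ j)] at ha
        rw [eq_neg_of_add_eq_zero_left ha]
        refine neg_mem (sum_mem fun i hi => ?_)
        rcases lt_or_gt_of_ne (Finset.ne_of_mem_erase hi) with hij | hij
        · exact Ideal.mul_mem_left _ _ (Ideal.subset_span ⟨i, hij, rfl⟩)
        · rw [hsupp i hij, zero_mul]
          exact zero_mem _
      obtain ⟨x, hx, hxj, hx0⟩ := exists_koszulSyzygies_apply_eq (hreg j _ hlast)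
      refine (Submodule.sub_mem_iff_left _ hx).1 (ih (a - x) (fun i hi => ?_) ?_)
      · rcases (show j ≤ i from hi).eq_or_lt with rfl | hij
        · simp [hxj]
        · simp [hx0 i hij, hsupp i hij]
      · simp [sub_mul, Finset.sum_sub_distrib, ha, sum_mul_eq_zero_of_mem_koszulSyzygies hx]
    · exact ih a (fun i hi => absurd i.isLt (by omega)) ha

/-- for a regular sequence `(f_1, …, f_m)`, every syzygy lies in the
submodule generated by the Koszul syzygies `f_j·e_i − f_i·e_j` (`i < j`). -/
theorem regular_sequence_koszul_syzygies
    (hreg : ∀ j : Fin m, ∀ q : MvPolynomial (Fin n) K,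
      q * f j ∈ Ideal.span (f '' {i : Fin m | i < j}) →
      q ∈ Ideal.span (f '' {i : Fin m | i < j}))
    (a : Fin m → MvPolynomial (Fin n) K) (ha : bar f a = 0) :
    a ∈ Submodule.span (MvPolynomial (Fin n) K)
      {x : Fin m → MvPolynomial (Fin n) K | ∃ i j : Fin m, i < j ∧
        x = f j • (Pi.single i 1 : Fin m → MvPolynomial (Fin n) K) -
          f i • (Pi.single j 1 : Fin m → MvPolynomial (Fin n) K)} := by
  exact mem_koszulSyzygies_of_support_lt hreg m a (fun i hi => absurd i.isLt hi.not_gt) ha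

end

end SigGB
end
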